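/- Let C be a maximal cap in AG(3,3) and let f : (Fin 3 → ZMod 3) → ZMod 3 be any surjective affine map (so the three fibers of f are three parallel planes). Then the multiset of cardinalities {|C ∩ f⁻¹(0)|, |C ∩ f⁻¹(1)|, |C ∩ f⁻¹(2)|} is either {4, 4, 1} or {3, 3, 3}. -/

import Mathlib

/-- A cap in `AG(n,3)`: a finite set of points of `Fin n → ZMod 3` containing no
three distinct collinear points (three distinct points are collinear iff they sum to zero). -/
def IsCap {n : ℕ} (C : Finset (Fin n → ZMod 3)) : Prop :=
  ∀ x ∈ C, ∀ y ∈ C, ∀ z ∈ C, x ≠ y → x ≠ z → y ≠ z → x + y + z ≠ 0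

/-- A maximal cap: a cap of largest possible size. -/
def MaximalCap {n : ℕ} (C : Finset (Fin n → ZMod 3)) : Prop :=
  IsCap C ∧ ∀ D : Finset (Fin n → ZMod 3), IsCap D → D.card ≤ C.card

/-!
Fix a cap `A` with `n` points in a space of dimension `d` over the field with `q` elements. Any `k`
of its points, `1 ≤ k ≤ 3`, are affinely independent, so exactly `q ^ (d - k + 1)` linear
functionals are constant on them. Counting the pairs of a nonzero functional and a `k`-subset of `A`
inside one of its fibers therefore determines `∑ P(m)` for every cubic polynomial `P` without
constant term, where `m` runs over the numbers of points of `A` in the fibers of the nonzero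
functionals. Three choices of `P` suffice:

* `m (m - 2) ^ 2 ≥ 0` bounds plane caps: `n ≤ q + 2`, and if equality holds then every line meets
  `A` in `0` or `2` points, so that `n = q + 2` is even. Hence for `q = 3` all planes of a
  three-dimensional space meet `A` in at most `4` points.
* `m (m - 2) (m - 4)`, for `q = 3`, `d = 3` and `n ≥ 10`, is nonpositive on each plane (they all
  have `2 ≤ m ≤ 4`) but has positive total, so `n ≤ 9`.
* `m (m - 3) (m - 5)`, for `q = 3`, `d = 3` and `n = 9`, has total `0`. Its sum over three parallel
  planes is `0` for the splittings `4 + 4 + 1` and `3 + 3 + 3`, and positive for the only other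
  splitting, `4 + 3 + 2`, which therefore never occurs.
-/

open Finset Module

section FiberCard

variable {α β : Type*} [DecidableEq β]

/-- The number of points of `A` in the fiber of `f` over `c`. -/
def fiberCard (A : Finset α) (f : α → β) (c : β) : ℕ := #{x ∈ A | f x = c}

lemma sum_fiberCard [Fintype β] (A : Finset α) (f : α → β) : ∑ c, fiberCard A f c = #A :=
  (card_eq_sum_card_fiberwise fun _ _ ↦ mem_coe.2 (mem_univ _)).symm

lemma sum_choose_fiberCard [Fintype β] (A : Finset α) (f : α → β) (k : ℕ) :
    ∑ c, (fiberCard A f c).choose (k + 1) =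
      #{s ∈ A.powersetCard (k + 1) | ∀ x ∈ s, ∀ y ∈ s, f x = f y} := by
  classical
  have hdisj : ((univ : Finset β) : Set β).PairwiseDisjoint
      fun c ↦ powersetCard (k + 1) {x ∈ A | f x = c} := by
    refine fun c _ d _ hcd ↦ disjoint_left.2 fun s hc hd ↦ hcd ?_
    rw [mem_powersetCard] at hc hd
    obtain ⟨x, hx⟩ : s.Nonempty := card_pos.1 (by omega)
    rw [← (mem_filter.1 (hc.1 hx)).2, (mem_filter.1 (hd.1 hx)).2]
  simp only [fiberCard, ← card_powersetCard]
  rw [← card_biUnion hdisj]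
  congr 1
  ext s
  simp only [mem_biUnion, mem_univ, true_and, mem_powersetCard, subset_iff, mem_filter]
  constructor
  · rintro ⟨c, hs, hk⟩
    exact ⟨⟨fun x hx ↦ (hs hx).1, hk⟩, fun x hx y hy ↦ (hs hx).2.trans (hs hy).2.symm⟩
  · rintro ⟨⟨hs, hk⟩, hf⟩
    obtain ⟨x, hx⟩ : s.Nonempty := card_pos.1 (by omega)
    exact ⟨f x, fun y hy ↦ ⟨hs hy, hf y hy x hx⟩, hk⟩

end FiberCard

lemma two_mul_choose_two (m : ℕ) : (2 * m.choose 2 : ℤ) = m * (m - 1) := by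
  have h := descPochhammer_eval_eq_descFactorial ℤ m 2
  rw [Nat.descFactorial_eq_factorial_mul_choose] at h
  simpa [descPochhammer_succ_right] using h.symm

lemma six_mul_choose_three (m : ℕ) : (6 * m.choose 3 : ℤ) = m * (m - 1) * (m - 2) := by
  have h := descPochhammer_eval_eq_descFactorial ℤ m 3
  rw [Nat.descFactorial_eq_factorial_mul_choose] at h
  simpa [descPochhammer_succ_right, Nat.factorial] using h.symm

lemma cubic_eq_sum_choose (m : ℕ) (a b : ℤ) :
    (m * (m - a) * (m - b) : ℤ) =
      6 * m.choose 3 + (3 - a - b) * (2 * m.choose 2) + (1 - a) * (1 - b) * m.choose 1 := by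
  rw [six_mul_choose_three, two_mul_choose_two, Nat.choose_one_right]
  ring

lemma sum_zmod_three {M : Type*} [AddCommMonoid M] (g : ZMod 3 → M) :
    ∑ c, g c = g 0 + g 1 + g 2 :=
  Fin.sum_univ_three g

lemma sum_cubic_nonneg_of_add_eq_nine {a b c : ℕ} (ha : a ≤ 4) (hb : b ≤ 4) (hc : c ≤ 4)
    (h : a + b + c = 9) :
    (0 : ℤ) ≤ a * (a - 3) * (a - 5) + b * (b - 3) * (b - 5) + c * (c - 3) * (c - 5) := by
  obtain rfl : c = 9 - a - b := by omega
  interval_cases a <;> interval_cases b <;> omega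

lemma eq_of_sum_cubic_eq_zero_of_add_eq_nine {a b c : ℕ} (ha : a ≤ 4) (hb : b ≤ 4) (hc : c ≤ 4)
    (h : a + b + c = 9)
    (hzero : (a * (a - 3) * (a - 5) + b * (b - 3) * (b - 5) + c * (c - 3) * (c - 5) : ℤ) = 0) :
    ({a, b, c} : Multiset ℕ) = {4, 4, 1} ∨ ({a, b, c} : Multiset ℕ) = {3, 3, 3} := by
  obtain rfl : c = 9 - a - b := by omega
  interval_cases a <;> interval_cases b <;> first | omega | decide

lemma fiberCard_affineMap {K V : Type*} [Ring K] [DecidableEq K] [AddCommGroup V] [Module K V]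
    (A : Finset V) (f : V →ᵃ[K] K) (c : K) :
    fiberCard A f c = fiberCard A f.linear (c - f 0) := by
  simp only [fiberCard, f.decomp', Pi.sub_apply, sub_left_inj]

lemma sum_comp_fiberCard_affineMap {K V M : Type*} [Ring K] [Fintype K] [DecidableEq K]
    [AddCommGroup V] [Module K V] [AddCommMonoid M] (A : Finset V) (f : V →ᵃ[K] K) (g : ℕ → M) :
    ∑ c, g (fiberCard A f c) = ∑ c, g (fiberCard A f.linear c) := by
  simp only [fiberCard_affineMap A f]
  exact (Equiv.subRight (f 0)).sum_comp fun c ↦ g (fiberCard A f.linear c)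

section DoubleCounting

variable {K V : Type*} [Field K] [Fintype K] [AddCommGroup V] [Module K V]
  [FiniteDimensional K V]

noncomputable instance : Fintype (Dual K V) :=
  have : Finite (Dual K V) := finite_of_finite K
  Fintype.ofFinite _

lemma card_dual_forall_eq {d : ℕ} (s : Set V)
    [DecidablePred fun φ : Dual K V ↦ ∀ x ∈ s, ∀ y ∈ s, φ x = φ y]
    (hd : finrank K V = d + finrank K (vectorSpan K s)) :
    #{φ : Dual K V | ∀ x ∈ s, ∀ y ∈ s, φ x = φ y} = Fintype.card K ^ d := by
  have hmem (φ : Dual K V) :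
      φ ∈ (vectorSpan K s).dualAnnihilator ↔ ∀ x ∈ s, ∀ y ∈ s, φ x = φ y := by
    rw [vectorSpan_def, ← SetLike.mem_coe, Submodule.coe_dualAnnihilator_span]
    simp only [Set.vsub_subset_iff, vsub_eq_sub, Set.mem_ofPred_eq, SetLike.mem_coe,
      LinearMap.mem_ker, map_sub, sub_eq_zero]
  have hfin : finrank K (vectorSpan K s).dualAnnihilator = d := by
    have hsum := Subspace.finrank_add_finrank_dualAnnihilator_eq (vectorSpan K s)
    omega
  rw [← hfin, ← Nat.card_eq_fintype_card, ← natCard_eq_pow_finrank (K := K)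
    (V := (vectorSpan K s).dualAnnihilator), ← Fintype.card_subtype, ← Nat.card_eq_fintype_card]
  exact Nat.card_congr (Equiv.subtypeEquivRight fun φ ↦ (hmem φ).symm)

variable [DecidableEq K] {A : Finset V} {d k : ℕ}

theorem sum_dual_choose_fiberCard
    (hA : ∀ s ∈ A.powersetCard (k + 1), finrank K (vectorSpan K (s : Set V)) = k)
    (hV : finrank K V = d + k) :
    ∑ φ : Dual K V, ∑ c, (fiberCard A φ c).choose (k + 1) =
      (#A).choose (k + 1) * Fintype.card K ^ d := by
  classical
  calc ∑ φ : Dual K V, ∑ c, (fiberCard A φ c).choose (k + 1)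
      = ∑ φ : Dual K V, #{s ∈ A.powersetCard (k + 1) | ∀ x ∈ s, ∀ y ∈ s, φ x = φ y} :=
        sum_congr rfl fun φ _ ↦ sum_choose_fiberCard A φ k
    _ = ∑ s ∈ A.powersetCard (k + 1), #{φ : Dual K V | ∀ x ∈ s, ∀ y ∈ s, φ x = φ y} :=
        sum_card_bipartiteAbove_eq_sum_card_bipartiteBelow _
    _ = ∑ _s ∈ A.powersetCard (k + 1), Fintype.card K ^ d :=
        sum_congr rfl fun s hs ↦ card_dual_forall_eq (s : Set V) (by rw [hA s hs, hV])
    _ = (#A).choose (k + 1) * Fintype.card K ^ d := by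
        rw [sum_const, card_powersetCard, smul_eq_mul]

open scoped Classical in
theorem sum_dual_ne_zero_choose_fiberCard
    (hA : ∀ s ∈ A.powersetCard (k + 1), finrank K (vectorSpan K (s : Set V)) = k)
    (hV : finrank K V = d + k) :
    ∑ φ : Dual K V with φ ≠ 0, ∑ c, ((fiberCard A φ c).choose (k + 1) : ℤ) =
      (#A).choose (k + 1) * ((Fintype.card K : ℤ) ^ d - 1) := by
  have hzero : ∑ c, (fiberCard A (0 : Dual K V) c).choose (k + 1) = (#A).choose (k + 1) := by
    rw [sum_eq_single 0 (fun c _ hc ↦ by simp [fiberCard, hc.symm]) (by simp)]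
    simp [fiberCard]
  have htotal := sum_dual_choose_fiberCard hA hV
  rw [← add_sum_erase univ _ (mem_univ 0), hzero, ← filter_ne'] at htotal
  zify at htotal
  linear_combination htotal

end DoubleCounting

/-- The notion of a cap over an arbitrary division ring, stated in a vector space `V` regarded as an
affine space. -/
def NoThreeCollinear (K : Type*) {V : Type*} [DivisionRing K] [AddCommGroup V] [Module K V]
    (A : Finset V) : Prop :=
  ∀ x ∈ A, ∀ y ∈ A, ∀ z ∈ A, x ≠ y → x ≠ z → y ≠ z → ¬ Collinear K {x, y, z}

namespace NoThreeCollinear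

lemma preimage {K V W : Type*} [DivisionRing K] [AddCommGroup V] [Module K V] [AddCommGroup W]
    [Module K W] {A : Finset V} (hA : NoThreeCollinear K A) (g : W →ᵃ[K] V)
    (hg : Function.Injective g) : NoThreeCollinear K (A.preimage g hg.injOn) := by
  intro x hx y hy z hz hxy hxz hyz
  rw [mem_preimage] at hx hy hz
  have hgxyz := hA _ hx _ hy _ hz (hg.ne hxy) (hg.ne hxz) (hg.ne hyz)
  rw [← affineIndependent_iff_not_collinear_set] at hgxyz ⊢
  refine AffineIndependent.of_comp g ?_
  convert hgxyz using 1
  ext i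
  fin_cases i <;> rfl

lemma finrank_vectorSpan {K V : Type*} [DivisionRing K] [AddCommGroup V] [Module K V]
    {A : Finset V} (hA : NoThreeCollinear K A) {k : ℕ} (hk : k ≤ 2) {s : Finset V}
    (hs : s ∈ A.powersetCard (k + 1)) : finrank K (vectorSpan K (s : Set V)) = k := by
  classical
  obtain ⟨hsA, hcard⟩ := mem_powersetCard.1 hs
  interval_cases k
  · obtain ⟨x, rfl⟩ := card_eq_one.1 hcard
    rw [coe_singleton, vectorSpan_singleton, finrank_bot]
  · obtain ⟨x, y, hxy, rfl⟩ := card_eq_two.1 hcard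
    rw [coe_pair, ← Matrix.range_cons_cons_empty x y ![]]
    exact (affineIndependent_of_ne K hxy).finrank_vectorSpan rfl
  · obtain ⟨x, y, z, hxy, hxz, hyz, rfl⟩ := card_eq_three.1 hcard
    have hxyz := hA x (hsA (by simp)) y (hsA (by simp)) z (hsA (by simp)) hxy hxz hyz
    rw [coe_insert, coe_pair, ← Matrix.range_cons_cons_empty y z ![], Set.insert_eq,
      ← Matrix.range_cons]
    exact (affineIndependent_iff_not_collinear_set.2 hxyz).finrank_vectorSpan rfl

section Field

variable {K V : Type*} [Field K] [Fintype K] [DecidableEq K] [AddCommGroup V] [Module K V]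
  {A : Finset V}

open scoped Classical in
theorem sum_cubic_fiberCard [FiniteDimensional K V] (hA : NoThreeCollinear K A) {r : ℕ}
    (hV : finrank K V = r + 2) (a b : ℤ) :
    ∑ φ : Dual K V with φ ≠ 0, ∑ c,
        (fiberCard A φ c * (fiberCard A φ c - a) * (fiberCard A φ c - b) : ℤ) =
      #A * ((#A - 1) * (#A - 2) * ((Fintype.card K : ℤ) ^ r - 1) +
        (3 - a - b) * (#A - 1) * ((Fintype.card K : ℤ) ^ (r + 1) - 1) +
        (1 - a) * (1 - b) * ((Fintype.card K : ℤ) ^ (r + 2) - 1)) := by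
  have h1 := sum_dual_ne_zero_choose_fiberCard (k := 0)
    (fun s ↦ hA.finrank_vectorSpan (by simp)) (d := r + 2) (by omega)
  have h2 := sum_dual_ne_zero_choose_fiberCard (k := 1)
    (fun s ↦ hA.finrank_vectorSpan (by simp)) (d := r + 1) (by omega)
  have h3 := sum_dual_ne_zero_choose_fiberCard (k := 2)
    (fun s ↦ hA.finrank_vectorSpan le_rfl) (d := r) (by omega)
  simp only [Nat.reduceAdd] at h1 h2 h3
  simp only [cubic_eq_sum_choose, sum_add_distrib, ← mul_sum, h1, h2, h3]
  rw [Nat.choose_one_right]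
  linear_combination ((Fintype.card K : ℤ) ^ r - 1) * six_mul_choose_three (#A) +
    (3 - a - b) * ((Fintype.card K : ℤ) ^ (r + 1) - 1) * two_mul_choose_two (#A)

open scoped Classical in
theorem sum_mul_sub_two_sq_fiberCard [FiniteDimensional K V] (hA : NoThreeCollinear K A)
    (hV : finrank K V = 2) :
    ∑ φ : Dual K V with φ ≠ 0, ∑ c, (fiberCard A φ c * (fiberCard A φ c - 2) ^ 2 : ℤ) =
      #A * (Fintype.card K - 1) * (Fintype.card K + 2 - #A) := by
  simp only [sq, ← mul_assoc]
  rw [hA.sum_cubic_fiberCard (r := 0) hV]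
  ring

omit [DecidableEq K] in
theorem card_le_card_add_two (hA : NoThreeCollinear K A) (hV : finrank K V = 2) :
    #A ≤ Fintype.card K + 2 := by
  classical
  by_contra! hlt
  have : FiniteDimensional K V := finite_of_finrank_pos (by omega)
  have hq : (1 : ℤ) < Fintype.card K := mod_cast Fintype.one_lt_card
  have hpos : (0 : ℤ) < #A * (Fintype.card K - 1) := mul_pos (by omega) (by omega)
  have hnonneg : 0 ≤ (#A * (Fintype.card K - 1) * (Fintype.card K + 2 - #A) : ℤ) := by
    rw [← hA.sum_mul_sub_two_sq_fiberCard hV]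
    positivity
  have hle := nonneg_of_mul_nonneg_right hnonneg hpos
  omega

theorem fiberCard_eq_zero_or_two (hA : NoThreeCollinear K A) (hV : finrank K V = 2)
    (hcard : #A = Fintype.card K + 2) {φ : Dual K V} (hφ : φ ≠ 0) (c : K) :
    fiberCard A φ c = 0 ∨ fiberCard A φ c = 2 := by
  classical
  have : FiniteDimensional K V := finite_of_finrank_pos (by omega)
  have hsum := hA.sum_mul_sub_two_sq_fiberCard hV
  rw [hcard, Nat.cast_add, Nat.cast_ofNat, sub_self, mul_zero,
    sum_eq_zero_iff_of_nonneg fun ψ _ ↦ by positivity] at hsum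
  have hline := hsum φ (by simpa using hφ)
  rw [sum_eq_zero_iff_of_nonneg fun d _ ↦ by positivity] at hline
  have hpoint := hline c (mem_univ c)
  rw [mul_eq_zero, sq_eq_zero_iff] at hpoint
  omega

omit [DecidableEq K] in
theorem card_le_card_add_one (hA : NoThreeCollinear K A) (hK : Odd (Fintype.card K))
    (hV : finrank K V = 2) : #A ≤ Fintype.card K + 1 := by
  classical
  refine Nat.le_of_lt_succ (lt_of_le_of_ne (hA.card_le_card_add_two hV) fun hcard ↦ ?_)
  have : Nontrivial V := nontrivial_of_finrank_pos (R := K) (by omega)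
  obtain ⟨φ, hφ⟩ := exists_ne (0 : Dual K V)
  have heven : Even #A := by
    rw [← sum_fiberCard A φ]
    refine even_sum _ fun c _ ↦ ?_
    rcases hA.fiberCard_eq_zero_or_two hV hcard hφ c with h | h <;> simp [h]
  rw [hcard] at heven
  exact Nat.not_even_iff_odd.2 (hK.add_even even_two) heven

theorem fiberCard_le_card_add_one (hA : NoThreeCollinear K A) (hK : Odd (Fintype.card K))
    (hV : finrank K V = 3) {φ : Dual K V} (hφ : φ ≠ 0) (c : K) :
    fiberCard A φ c ≤ Fintype.card K + 1 := by
  classical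
  have : FiniteDimensional K V := finite_of_finrank_pos (by omega)
  obtain ⟨p, hp⟩ := LinearMap.surjective hφ c
  let g : LinearMap.ker φ →ᵃ[K] V :=
    (LinearMap.ker φ).subtype.toAffineMap + AffineMap.const K _ p
  have hg : Function.Injective g := fun v w h ↦ Subtype.ext (add_right_cancel h)
  have hrange (x : V) : x ∈ Set.range g ↔ φ x = c := by
    constructor
    · rintro ⟨v, rfl⟩
      simp [g, hp]
    · intro hx
      exact ⟨⟨x - p, by simp [hx, hp]⟩, by simp [g]⟩
  have hker : finrank K (LinearMap.ker φ) = 2 := by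
    have hsum := Dual.finrank_ker_add_one_of_ne_zero hφ
    omega
  calc fiberCard A φ c = #(A.preimage g hg.injOn) := by simp [fiberCard, card_preimage, hrange]
    _ ≤ Fintype.card K + 1 := (hA.preimage g hg).card_le_card_add_one hK hker

end Field

section ZModThree

variable {V : Type*} [AddCommGroup V] [Module (ZMod 3) V] {A : Finset V}

lemma fiberCard_le_four (hA : NoThreeCollinear (ZMod 3) A) (hV : finrank (ZMod 3) V = 3)
    {φ : Dual (ZMod 3) V} (hφ : φ ≠ 0) (c : ZMod 3) : fiberCard A φ c ≤ 4 :=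
  hA.fiberCard_le_card_add_one (by decide) hV hφ c

theorem card_le_nine (hA : NoThreeCollinear (ZMod 3) A) (hV : finrank (ZMod 3) V = 3) :
    #A ≤ 9 := by
  classical
  by_contra! hlt
  have : FiniteDimensional (ZMod 3) V := finite_of_finrank_pos (by omega)
  have hnonpos (φ : Dual (ZMod 3) V) (hφ : φ ≠ 0) (c : ZMod 3) :
      (fiberCard A φ c * (fiberCard A φ c - 2) * (fiberCard A φ c - 4) : ℤ) ≤ 0 := by
    have hle := hA.fiberCard_le_four hV hφ
    have hge : 2 ≤ fiberCard A φ c := by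
      have hrest : ∑ d ∈ univ.erase c, fiberCard A φ d ≤ 2 * 4 :=
        sum_le_card_nsmul _ _ 4 (fun d _ ↦ hle d) |>.trans (by simp [ZMod.card])
      have htotal := add_sum_erase univ (fiberCard A φ) (mem_univ c)
      rw [sum_fiberCard] at htotal
      omega
    exact mul_nonpos_of_nonneg_of_nonpos (mul_nonneg (by omega) (by omega))
      (by have := hle c; omega)
  have hsum_nonpos := sum_nonpos fun φ (hφ : φ ∈ ({φ | φ ≠ 0} : Finset (Dual (ZMod 3) V))) ↦
    sum_nonpos fun c (_ : c ∈ univ) ↦ hnonpos φ (mem_filter.1 hφ).2 c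
  have hn : (10 : ℤ) ≤ #A := mod_cast hlt
  rw [hA.sum_cubic_fiberCard (r := 1) hV, ZMod.card] at hsum_nonpos
  exact hsum_nonpos.not_gt (mul_pos (by omega) (by push_cast; nlinarith))

theorem sum_cubic_fiberCard_eq_zero (hA : NoThreeCollinear (ZMod 3) A)
    (hV : finrank (ZMod 3) V = 3) (hcard : #A = 9) {φ : Dual (ZMod 3) V} (hφ : φ ≠ 0) :
    ∑ c, (fiberCard A φ c * (fiberCard A φ c - 3) * (fiberCard A φ c - 5) : ℤ) = 0 := by
  classical
  have : FiniteDimensional (ZMod 3) V := finite_of_finrank_pos (by omega)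
  have hnonneg (ψ : Dual (ZMod 3) V) (hψ : ψ ∈ ({ψ | ψ ≠ 0} : Finset (Dual (ZMod 3) V))) :
      0 ≤ ∑ c, (fiberCard A ψ c * (fiberCard A ψ c - 3) * (fiberCard A ψ c - 5) : ℤ) := by
    have hle := hA.fiberCard_le_four hV (mem_filter.1 hψ).2
    rw [sum_zmod_three]
    exact sum_cubic_nonneg_of_add_eq_nine (hle 0) (hle 1) (hle 2)
      (by rw [← sum_zmod_three (fiberCard A ψ), sum_fiberCard, hcard])
  have hsum := hA.sum_cubic_fiberCard (r := 1) hV 3 5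
  rw [hcard, ZMod.card] at hsum
  norm_num only at hsum
  exact (sum_eq_zero_iff_of_nonneg hnonneg).1 hsum φ (by simpa using hφ)

end ZModThree

end NoThreeCollinear

/-- The elliptic paraboloid `z = x ^ 2 + y ^ 2` in `AG(3,3)`, a cap with nine points. -/
def paraboloid : Finset (Fin 3 → ZMod 3) := {x | x 2 = x 0 ^ 2 + x 1 ^ 2}

lemma isCap_paraboloid : IsCap paraboloid := by
  intro x hx y hy z hz hxy _ _ h
  have anisotropic : ∀ s t : ZMod 3, s ^ 2 + t ^ 2 = 0 → s = 0 ∧ t = 0 := by decide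
  have three : (3 : ZMod 3) = 0 := rfl
  simp only [paraboloid, mem_filter, mem_univ, true_and] at hx hy hz
  have h0 : x 0 + y 0 + z 0 = 0 := congrFun h 0
  have h1 : x 1 + y 1 + z 1 = 0 := congrFun h 1
  have h2 : x 2 + y 2 + z 2 = 0 := congrFun h 2
  obtain ⟨e0, e1⟩ := anisotropic (x 0 - y 0) (x 1 - y 1) (by
    rw [hx, hy, hz, eq_neg_of_add_eq_zero_right h0, eq_neg_of_add_eq_zero_right h1] at h2
    linear_combination -h2 + (x 0 ^ 2 + y 0 ^ 2 + x 1 ^ 2 + y 1 ^ 2) * three)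
  rw [sub_eq_zero] at e0 e1
  refine hxy (funext fun i ↦ ?_)
  fin_cases i
  · exact e0
  · exact e1
  · change x 2 = y 2
    rw [hx, hy, e0, e1]

lemma card_paraboloid : #paraboloid = 9 := by
  decide +kernel

lemma IsCap.noThreeCollinear {n : ℕ} {C : Finset (Fin n → ZMod 3)} (hC : IsCap C) :
    NoThreeCollinear (ZMod 3) C := by
  intro x hx y hy z hz hxy hxz hyz h
  obtain ⟨v, hv⟩ := (collinear_iff_of_mem (Set.mem_insert x _)).1 h
  obtain ⟨r, rfl⟩ := hv y (by simp)
  obtain ⟨s, rfl⟩ := hv z (by simp)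
  have hr : r ≠ 0 := by rintro rfl; simp at hxy
  have hs : s ≠ 0 := by rintro rfl; simp at hxz
  have hrs : r ≠ s := by rintro rfl; exact hyz rfl
  have hsum : ∀ r s : ZMod 3, r ≠ 0 → s ≠ 0 → r ≠ s → r + s = 0 := by decide
  refine hC _ hx _ hy _ hz hxy hxz hyz ?_
  have three : (3 : ZMod 3) = 0 := rfl
  ext i
  simp only [vadd_eq_add, Pi.add_apply, Pi.smul_apply, smul_eq_mul, Pi.zero_apply]
  linear_combination x i * three + v i * hsum r s hr hs hrs

theorem maximal_cap_AG33_plane_intersections_general {V : Type*} [AddCommGroup V]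
    [Module (ZMod 3) V] (hV : finrank (ZMod 3) V = 3) {A : Finset V}
    (hA : NoThreeCollinear (ZMod 3) A) (hcard : 9 ≤ #A)
    (f : V →ᵃ[ZMod 3] ZMod 3) (hf : Function.Surjective f) :
    ({#{x ∈ A | f x = 0}, #{x ∈ A | f x = 1}, #{x ∈ A | f x = 2}} : Multiset ℕ) = {4, 4, 1} ∨
    ({#{x ∈ A | f x = 0}, #{x ∈ A | f x = 1}, #{x ∈ A | f x = 2}} : Multiset ℕ) = {3, 3, 3} := by
  have hlin : f.linear ≠ 0 := fun h ↦ by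
    obtain ⟨x, hx⟩ := f.linear_surjective_iff.2 hf 1
    simp [h] at hx
  have hnine : #A = 9 := le_antisymm (hA.card_le_nine hV) hcard
  have hle (c : ZMod 3) : fiberCard A f c ≤ 4 := by
    rw [fiberCard_affineMap]
    exact hA.fiberCard_le_four hV hlin _
  have htotal : fiberCard A f 0 + fiberCard A f 1 + fiberCard A f 2 = 9 := by
    rw [← sum_zmod_three (fiberCard A f), sum_fiberCard, hnine]
  have hcubic : ∑ c, (fiberCard A f c * (fiberCard A f c - 3) * (fiberCard A f c - 5) : ℤ) = 0 := by
    rw [← hA.sum_cubic_fiberCard_eq_zero hV hnine hlin]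
    exact sum_comp_fiberCard_affineMap A f fun m ↦ (m * (m - 3) * (m - 5) : ℤ)
  rw [sum_zmod_three] at hcubic
  exact eq_of_sum_cubic_eq_zero_of_add_eq_nine (hle 0) (hle 1) (hle 2) htotal hcubic

/-- A maximal cap in `AG(3,3)` meets the three parallel planes given by the fibers of a
surjective affine map `f : AG(3,3) → ZMod 3` in `4, 4, 1` or `3, 3, 3` points
(as a multiset of cardinalities). -/
theorem maximal_cap_AG33_plane_intersections
    (C : Finset (Fin 3 → ZMod 3)) (hC : MaximalCap C)
    (f : (Fin 3 → ZMod 3) →ᵃ[ZMod 3] ZMod 3) (hf : Function.Surjective f) :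
    ({(C.filter fun x => f x = 0).card,
      (C.filter fun x => f x = 1).card,
      (C.filter fun x => f x = 2).card} : Multiset ℕ) = {4, 4, 1} ∨
    ({(C.filter fun x => f x = 0).card,
      (C.filter fun x => f x = 1).card,
      (C.filter fun x => f x = 2).card} : Multiset ℕ) = {3, 3, 3} := by
  exact maximal_cap_AG33_plane_intersections_general (by simp) hC.1.noThreeCollinear
    (card_paraboloid ▸ hC.2 paraboloid isCap_paraboloid) f hf
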